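/- Let G be a group, let Γ and U be subgroups of G, and suppose there are finitely many elements g₁, …, g_r ∈ G such that G is the disjoint union of the double cosets Γ·gᵢ·U for i = 1, …, r. Let R be a commutative ring and let ρ : U → (Λ ≃ₗ[R] Λ) be a representation of U by R-linear automorphisms of an R-module Λ. Then the R-module M of all functions f : G → Λ satisfying f(γ·g·u) = ρ(u)⁻¹ (f g) for all γ ∈ Γ, g ∈ G, u ∈ U is isomorphic, as an R-module, to the direct sum ⨁ᵢ Λ^{Zᵢ}, where Zᵢ = gᵢ⁻¹·Γ·gᵢ ∩ U and Λ^{Zᵢ} denotes the R-submodule of vectors of Λ fixed by ρ(z) for every z ∈ Zᵢ. -/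

import Mathlib

/-!
An equivariant `f` is determined on `Γ · gᵢ · U` by its value `f gᵢ`, and `f gᵢ` is fixed by
`Zᵢ = gᵢ⁻¹ Γ gᵢ ∩ U`: for `z = gᵢ⁻¹ γ gᵢ` one has `ρ(z)⁻¹ (f gᵢ) = f (gᵢ z) = f (γ gᵢ) = f gᵢ`.
So evaluation at the representatives is a linear map `M → Πᵢ Λ^{Zᵢ}`, injective because the double
cosets cover `G`. It is surjective because `γ gᵢ u ↦ ρ(u)⁻¹ vᵢ` is well defined whenever each `vᵢ`
is fixed by `Zᵢ`: disjointness pins down `i`, and `γ gᵢ u = γ' gᵢ u'` forces `u u'⁻¹ ∈ Zᵢ`.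
As there are finitely many double cosets, the product is the direct sum.
-/

open scoped DirectSum

/-- **Double coset decomposition of the space of equivariant maps.**
If `G` is the disjoint union of finitely many double cosets `Γ · gᵢ · U`, then the
`R`-module of functions `f : G → Λ` with `f (γ * g * u) = ρ(u)⁻¹ (f g)` is isomorphic
to the direct sum of the fixed-point submodules `Λ^{Zᵢ}`, `Zᵢ = gᵢ⁻¹ Γ gᵢ ∩ U`. -/
theorem doubleCoset_equivariant_maps_iso_directSum_fixedPoints
    {G : Type*} [Group G] (Γ U : Subgroup G)
    {R : Type*} [CommRing R] {Λ : Type*} [AddCommGroup Λ] [Module R Λ]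
    (ρ : U →* (Λ ≃ₗ[R] Λ))
    (r : ℕ) (g : Fin r → G)
    (hcover : ∀ x : G, ∃ i : Fin r, ∃ γ ∈ Γ, ∃ u ∈ U, x = γ * g i * u)
    (hdisj : ∀ i j : Fin r, i ≠ j →
      Disjoint {x : G | ∃ γ ∈ Γ, ∃ u ∈ U, x = γ * g i * u}
        {x : G | ∃ γ ∈ Γ, ∃ u ∈ U, x = γ * g j * u})
    (M : Submodule R (G → Λ))
    (hM : ∀ f : G → Λ, f ∈ M ↔
      ∀ (γ : Γ) (x : G) (u : U), f (↑γ * x * ↑u) = (ρ u)⁻¹ (f x))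
    (Zfix : Fin r → Submodule R Λ)
    (hZfix : ∀ (i : Fin r) (v : Λ), v ∈ Zfix i ↔
      ∀ z : U, (∃ γ ∈ Γ, (z : G) = (g i)⁻¹ * γ * g i) → ρ z v = v) :
    Nonempty (M ≃ₗ[R] ⨁ (i : Fin r), ↥(Zfix i)) := by
  have hfix : ∀ f ∈ M, ∀ i, f (g i) ∈ Zfix i := by
    intro f hf i
    rw [hZfix]
    rintro z ⟨γ, hγ, hz⟩
    rw [hM] at hf
    have h1 := hf 1 (g i) z
    have h2 := hf ⟨γ, hγ⟩ (g i) 1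
    have e : g i * (z : G) = γ * g i := by rw [hz]; group
    simp only [OneMemClass.coe_one, one_mul, mul_one, map_one, inv_one, e] at h1 h2
    rw [h2] at h1
    exact (congrArg (ρ z) h1).trans ((ρ z).apply_symm_apply _)
  let ev : M →ₗ[R] (∀ i, Zfix i) :=
    { toFun := fun f i => ⟨f.1 (g i), hfix f.1 f.2 i⟩
      map_add' := fun _ _ => rfl
      map_smul' := fun _ _ => rfl }
  have hinj : Function.Injective ev := by
    rintro ⟨f, hf⟩ ⟨f', hf'⟩ h
    ext x
    obtain ⟨i, γ, hγ, u, hu, rfl⟩ := hcover x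
    have hi : f (g i) = f' (g i) := congrArg Subtype.val (congrFun h i)
    have h1 := (hM f).1 hf ⟨γ, hγ⟩ (g i) ⟨u, hu⟩
    have h2 := (hM f').1 hf' ⟨γ, hγ⟩ (g i) ⟨u, hu⟩
    exact h1.trans ((congrArg _ hi).trans h2.symm)
  have hsurj : Function.Surjective ev := by
    intro v
    choose idx c hc w hw hx using hcover
    let F : G → Λ := fun x => (ρ ⟨w x, hw x⟩)⁻¹ (v (idx x) : Λ)
    -- The value of `F` does not depend on the chosen decomposition of its argument.
    have key : ∀ (x : G) (j : Fin r) (γ : G) (_ : γ ∈ Γ) (u : U), x = γ * g j * u →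
        F x = (ρ u)⁻¹ (v j : Λ) := by
      intro x j γ hγ u h
      have hj : idx x = j := by
        by_contra hne
        exact Set.disjoint_left.1 (hdisj _ _ hne)
          ⟨c x, hc x, w x, hw x, hx x⟩ ⟨γ, hγ, u, u.2, h⟩
      subst hj
      have hz := (hZfix (idx x) _).1 (v (idx x)).2 (⟨w x, hw x⟩ * u⁻¹)
        ⟨(c x)⁻¹ * γ, Γ.mul_mem (Γ.inv_mem (hc x)) hγ, by
          have h' : c x * g (idx x) * w x = γ * g (idx x) * u := (hx x).symm.trans h
          have h'' : w x = (c x * g (idx x))⁻¹ * (γ * g (idx x) * u) :=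
            eq_inv_mul_of_mul_eq h'
          change w x * (u : G)⁻¹ = _
          rw [h'']
          group⟩
      have hz' := congrArg (fun y => (ρ ⟨w x, hw x⟩)⁻¹ y) hz
      rw [map_mul, map_inv, ← LinearEquiv.mul_apply, inv_mul_cancel_left] at hz'
      exact hz'.symm
    refine ⟨⟨F, (hM F).2 ?_⟩, ?_⟩
    · intro γ x u
      rw [key (γ * x * u) (idx x) (γ * c x) (Γ.mul_mem γ.2 (hc x)) (⟨w x, hw x⟩ * u) ?_]
      · rw [map_mul, mul_inv_rev, LinearEquiv.mul_apply]
      · change _ = _ * _ * (w x * (u : G))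
        conv_lhs => rw [hx x]
        simp only [mul_assoc]
    · funext i
      apply Subtype.ext
      change F (g i) = v i
      rw [key (g i) i 1 Γ.one_mem 1 (by simp)]
      simp
  exact ⟨(LinearEquiv.ofBijective ev ⟨hinj, hsurj⟩).trans
    (DirectSum.linearEquivFunOnFintype R (Fin r) fun i => Zfix i).symm⟩
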